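/- At every point of Ω, the covariant derivative of γ satisfies ∇_iγ_{jkl} = (1/2)∂_i∂_j∂_k∂_lφ − Σ_{r,s} g^{rs}(γ_{rij}γ_{skl} + γ_{rik}γ_{sjl} + γ_{ril}γ_{sjk}); in particular ∇_iγ_{jkl} is symmetric under all permutations of the four indices i, j, k, l. -/

import Mathlib

/-!
The partial derivatives of a smooth function commute (`pd_comm`), so `γ` is totally symmetric and
the Hessian metric `g`, hence its inverse, is a symmetric matrix. Writing
`Q(a,b;c,d) = Σ g^{rs} γ_{rab} γ_{scd}` (`gamPair`), each of the three Christoffel terms of `∇γ` is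
one value of `Q`, which gives
`∇_iγ_{jkl} = ½ ∂_i∂_j∂_k∂_lφ - (Q(i,j;k,l) + Q(i,k;j,l) + Q(i,l;j,k))` (`covGam_eq_gamPair`).
Since `Q(a,b;c,d)` is unchanged under `a ↔ b`, `c ↔ d` and exchange of the two pairs, the sum over
the three pairings of `{i,j,k,l}` is invariant under adjacent transpositions of the indices. These
generate the symmetric group on four letters (`symm_of_adjacent`).
-/

noncomputable section

/-- Partial derivative in the `i`-th coordinate direction. -/
def pd {n : ℕ} (i : Fin n) (f : (Fin n → ℝ) → ℝ) : (Fin n → ℝ) → ℝ :=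
  fun x => fderiv ℝ f x (Pi.single i 1)

variable {n : ℕ}

/-- The Hessian metric `g_{ij} = ∂_i ∂_j φ`. -/
def gmet (φ : (Fin n → ℝ) → ℝ) (x : Fin n → ℝ) : Matrix (Fin n) (Fin n) ℝ :=
  fun i j => pd i (pd j φ) x

/-- The inverse metric `g^{ij}`. -/
def gi (φ : (Fin n → ℝ) → ℝ) (x : Fin n → ℝ) : Matrix (Fin n) (Fin n) ℝ :=
  (gmet φ x)⁻¹

/-- The lowered difference tensor `γ_{ijk} = (1/2) ∂_i∂_j∂_k φ`. -/
def gam (φ : (Fin n → ℝ) → ℝ) (i j k : Fin n) : (Fin n → ℝ) → ℝ :=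
  fun x => (1 / 2) * pd i (pd j (pd k φ)) x

/-- The Christoffel symbols `Γ^i_{jk} = Σ_p g^{ip} γ_{pjk}`. -/
def Chr (φ : (Fin n → ℝ) → ℝ) (i j k : Fin n) : (Fin n → ℝ) → ℝ :=
  fun x => ∑ p, gi φ x i p * gam φ p j k x

/-- The first Koszul form `α_i = Σ_{r,p} g^{rp} γ_{pri}`. -/
def alph (φ : (Fin n → ℝ) → ℝ) (i : Fin n) : (Fin n → ℝ) → ℝ :=
  fun x => ∑ r, ∑ p, gi φ x r p * gam φ p r i x

/-- The second Koszul form `β_{ij} = ∂_i α_j`. -/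
def bet (φ : (Fin n → ℝ) → ℝ) (i j : Fin n) : (Fin n → ℝ) → ℝ :=
  pd i (alph φ j)

/-- Covariant derivative of the first Koszul form `∇_i α_j`. -/
def covAlpha (φ : (Fin n → ℝ) → ℝ) (i j : Fin n) : (Fin n → ℝ) → ℝ :=
  fun x => bet φ i j x - ∑ r, Chr φ r i j x * alph φ r x

/-- Covariant derivative of a covector field `∇_i X_j`. -/
def covCo (φ : (Fin n → ℝ) → ℝ) (X : Fin n → (Fin n → ℝ) → ℝ) (i j : Fin n) :
    (Fin n → ℝ) → ℝ :=
  fun x => pd i (X j) x - ∑ r, Chr φ r i j x * X r x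

/-- The Hessian `∇_i∇_j f` of a function. -/
def covHess (φ f : (Fin n → ℝ) → ℝ) (i j : Fin n) : (Fin n → ℝ) → ℝ :=
  fun x => pd i (pd j f) x - ∑ r, Chr φ r i j x * pd r f x

/-- Covariant derivative of the difference tensor `∇_i γ_{jkl}`. -/
def covGam (φ : (Fin n → ℝ) → ℝ) (i j k l : Fin n) : (Fin n → ℝ) → ℝ :=
  fun x => pd i (gam φ j k l) x -
    ∑ r, (Chr φ r i j x * gam φ r k l x + Chr φ r i k x * gam φ j r l x +
      Chr φ r i l x * gam φ j k r x)

/-- Second covariant derivative of the first Koszul form `∇_i∇_j α_k`. -/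
def cov2Alpha (φ : (Fin n → ℝ) → ℝ) (i j k : Fin n) : (Fin n → ℝ) → ℝ :=
  fun x => pd i (covAlpha φ j k) x -
    ∑ r, (Chr φ r i j x * covAlpha φ r k x + Chr φ r i k x * covAlpha φ j r x)

/-- The curvature tensor `R^i_{jkl}`. -/
def Riem (φ : (Fin n → ℝ) → ℝ) (i j k l : Fin n) : (Fin n → ℝ) → ℝ :=
  fun x => pd k (Chr φ i l j) x - pd l (Chr φ i k j) x +
    ∑ r, (Chr φ i k r x * Chr φ r l j x - Chr φ i l r x * Chr φ r k j x)

/-- The Ricci tensor `R_{jk} = Σ_s R^s_{jsk}`. -/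
def Ricci (φ : (Fin n → ℝ) → ℝ) (j k : Fin n) : (Fin n → ℝ) → ℝ :=
  fun x => ∑ s, Riem φ s j s k x

/-- The scalar curvature `R = Σ g^{jk} R_{jk}`. -/
def Scal (φ : (Fin n → ℝ) → ℝ) : (Fin n → ℝ) → ℝ :=
  fun x => ∑ j, ∑ k, gi φ x j k * Ricci φ j k x

/-- The Laplace–Beltrami operator of `g`. -/
def lap (φ u : (Fin n → ℝ) → ℝ) : (Fin n → ℝ) → ℝ :=
  fun x => ∑ i, ∑ j, gi φ x i j * (pd i (pd j u) x - ∑ k, Chr φ k i j x * pd k u x)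

/-- `|α|²`. -/
def normAlphaSq (φ : (Fin n → ℝ) → ℝ) : (Fin n → ℝ) → ℝ :=
  fun x => ∑ i, ∑ j, gi φ x i j * alph φ i x * alph φ j x

/-- `|γ|²`. -/
def normGamSq (φ : (Fin n → ℝ) → ℝ) : (Fin n → ℝ) → ℝ :=
  fun x => ∑ i, ∑ i', ∑ j, ∑ j', ∑ k, ∑ k',
    gi φ x i i' * gi φ x j j' * gi φ x k k' * gam φ i j k x * gam φ i' j' k' x

/-- `|∇γ|²`. -/
def normCovGamSq (φ : (Fin n → ℝ) → ℝ) : (Fin n → ℝ) → ℝ :=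
  fun x => ∑ i, ∑ i', ∑ j, ∑ j', ∑ k, ∑ k', ∑ l, ∑ l',
    gi φ x i i' * gi φ x j j' * gi φ x k k' * gi φ x l l' *
      covGam φ i j k l x * covGam φ i' j' k' l' x

/-- `|Rm|²` (the upper index is lowered with `g`). -/
def normRmSq (φ : (Fin n → ℝ) → ℝ) : (Fin n → ℝ) → ℝ :=
  fun x => ∑ i, ∑ i', ∑ j, ∑ j', ∑ k, ∑ k', ∑ l, ∑ l',
    gmet φ x i i' * gi φ x j j' * gi φ x k k' * gi φ x l l' *
      Riem φ i j k l x * Riem φ i' j' k' l' x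

/-- `|Ric|²`. -/
def normRicSq (φ : (Fin n → ℝ) → ℝ) : (Fin n → ℝ) → ℝ :=
  fun x => ∑ j, ∑ j', ∑ k, ∑ k',
    gi φ x j j' * gi φ x k k' * Ricci φ j k x * Ricci φ j' k' x

/-- The full contraction `Σ R_{ij} β_{ij}`. -/
def ricBeta (φ : (Fin n → ℝ) → ℝ) : (Fin n → ℝ) → ℝ :=
  fun x => ∑ i, ∑ i', ∑ j, ∑ j',
    gi φ x i i' * gi φ x j j' * Ricci φ i j x * bet φ i' j' x

/-- The full contraction `Σ R_{ij} ∇_i α_j`. -/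
def ricCovAlpha (φ : (Fin n → ℝ) → ℝ) : (Fin n → ℝ) → ℝ :=
  fun x => ∑ i, ∑ i', ∑ j, ∑ j',
    gi φ x i i' * gi φ x j j' * Ricci φ i j x * covAlpha φ i' j' x

/-- The full contraction `Σ (∇_i∇_j α_k) γ_{ijk}`. -/
def cov2AlphaGam (φ : (Fin n → ℝ) → ℝ) : (Fin n → ℝ) → ℝ :=
  fun x => ∑ i, ∑ i', ∑ j, ∑ j', ∑ k, ∑ k',
    gi φ x i i' * gi φ x j j' * gi φ x k k' * cov2Alpha φ i j k x * gam φ i' j' k' x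

variable {n : ℕ}

theorem pd_contDiff {f : (Fin n → ℝ) → ℝ} (hf : ContDiff ℝ (⊤ : ℕ∞) f) (i : Fin n) :
    ContDiff ℝ (⊤ : ℕ∞) (pd i f) := by
  have h : ContDiff ℝ (⊤ : ℕ∞) (fderiv ℝ f) := hf.fderiv_right (by simp)
  exact h.clm_apply contDiff_const

/-- Schwarz's theorem for the coordinate partial derivatives. -/
theorem pd_comm {f : (Fin n → ℝ) → ℝ} (hf : ContDiff ℝ (⊤ : ℕ∞) f) (i j : Fin n) :
    pd i (pd j f) = pd j (pd i f) := by
  funext x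
  have h : DifferentiableAt ℝ (fderiv ℝ f) x :=
    ((hf.fderiv_right (m := (⊤ : ℕ∞)) (by simp)).differentiable (by simp)) x
  have key (a b : Fin n) :
      pd a (pd b f) x = fderiv ℝ (fderiv ℝ f) x (Pi.single a 1) (Pi.single b 1) := by
    unfold pd
    rw [fderiv_clm_apply h (differentiableAt_const _)]
    simp
  have hs : IsSymmSndFDerivAt ℝ f x :=
    hf.contDiffAt.isSymmSndFDerivAt (by
      rw [minSmoothness_of_isRCLikeNormedField]
      exact WithTop.coe_le_coe.2 (le_top : (2 : ℕ∞) ≤ ⊤))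
  rw [key, key]
  exact hs _ _

theorem gam_swap_left {φ : (Fin n → ℝ) → ℝ} (hφ : ContDiff ℝ (⊤ : ℕ∞) φ) (i j k : Fin n) :
    gam φ i j k = gam φ j i k := by
  unfold gam
  rw [pd_comm (pd_contDiff hφ k) i j]

theorem gam_swap_right {φ : (Fin n → ℝ) → ℝ} (hφ : ContDiff ℝ (⊤ : ℕ∞) φ) (i j k : Fin n) :
    gam φ i j k = gam φ i k j := by
  unfold gam
  rw [pd_comm hφ j k]

/-- The inverse metric is symmetric. No invertibility is needed, since transposition commutes with
the matrix inverse even where the latter takes its junk value. -/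
theorem gi_symm {φ : (Fin n → ℝ) → ℝ} (hφ : ContDiff ℝ (⊤ : ℕ∞) φ) (x : Fin n → ℝ)
    (r s : Fin n) : gi φ x r s = gi φ x s r := by
  have h : (gmet φ x).transpose = gmet φ x := by
    ext a b
    simp only [Matrix.transpose_apply, gmet]
    rw [pd_comm hφ]
  have h' : (gi φ x).transpose = gi φ x := by
    unfold gi
    rw [Matrix.transpose_nonsing_inv, h]
  exact congrFun (congrFun h' s) r

/-- The contraction `Q(a,b;c,d) = Σ_{r,s} g^{rs} γ_{rab} γ_{scd}` at the point `x`. -/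
def gamPair (φ : (Fin n → ℝ) → ℝ) (x : Fin n → ℝ) (a b c d : Fin n) : ℝ :=
  ∑ r, ∑ s, gi φ x r s * (gam φ r a b x * gam φ s c d x)

theorem gamPair_swap_fst {φ : (Fin n → ℝ) → ℝ} (hφ : ContDiff ℝ (⊤ : ℕ∞) φ) (x : Fin n → ℝ)
    (a b c d : Fin n) : gamPair φ x a b c d = gamPair φ x b a c d := by
  unfold gamPair
  simp only [gam_swap_right hφ _ a b]

theorem gamPair_swap_snd {φ : (Fin n → ℝ) → ℝ} (hφ : ContDiff ℝ (⊤ : ℕ∞) φ) (x : Fin n → ℝ)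
    (a b c d : Fin n) : gamPair φ x a b c d = gamPair φ x a b d c := by
  unfold gamPair
  simp only [gam_swap_right hφ _ c d]

theorem gamPair_swap_pairs {φ : (Fin n → ℝ) → ℝ} (hφ : ContDiff ℝ (⊤ : ℕ∞) φ) (x : Fin n → ℝ)
    (a b c d : Fin n) : gamPair φ x a b c d = gamPair φ x c d a b := by
  unfold gamPair
  rw [Finset.sum_comm]
  refine Finset.sum_congr rfl fun r _ => Finset.sum_congr rfl fun s _ => ?_
  rw [gi_symm hφ x s r]
  ring

theorem sum_Chr_mul_gam {φ : (Fin n → ℝ) → ℝ} (hφ : ContDiff ℝ (⊤ : ℕ∞) φ) (x : Fin n → ℝ)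
    (a b c d : Fin n) : ∑ r, Chr φ r a b x * gam φ r c d x = gamPair φ x a b c d := by
  rw [gamPair_swap_pairs hφ]
  unfold gamPair Chr
  simp only [Finset.sum_mul]
  refine Finset.sum_congr rfl fun r _ => Finset.sum_congr rfl fun s _ => ?_
  ring

theorem covGam_eq_gamPair {φ : (Fin n → ℝ) → ℝ} (hφ : ContDiff ℝ (⊤ : ℕ∞) φ) (x : Fin n → ℝ)
    (i j k l : Fin n) :
    covGam φ i j k l x = (1 / 2) * pd i (pd j (pd k (pd l φ))) x -
      (gamPair φ x i j k l + gamPair φ x i k j l + gamPair φ x i l j k) := by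
  have hd : pd i (gam φ j k l) x = (1 / 2) * pd i (pd j (pd k (pd l φ))) x := by
    have h : DifferentiableAt ℝ (pd j (pd k (pd l φ))) x :=
      ((pd_contDiff (pd_contDiff (pd_contDiff hφ l) k) j).differentiable (by simp)) x
    change fderiv ℝ (fun y => (1 / 2 : ℝ) * pd j (pd k (pd l φ)) y) x (Pi.single i 1) = _
    rw [fderiv_const_mul h]
    rfl
  have hl (r : Fin n) : gam φ j r l = gam φ r j l := gam_swap_left hφ j r l
  have hr (r : Fin n) : gam φ j k r = gam φ r j k := by
    rw [gam_swap_right hφ j k r, gam_swap_left hφ j r k]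
  unfold covGam
  rw [hd, ← sum_Chr_mul_gam hφ, ← sum_Chr_mul_gam hφ, ← sum_Chr_mul_gam hφ,
    ← Finset.sum_add_distrib, ← Finset.sum_add_distrib]
  congr 1
  refine Finset.sum_congr rfl fun r _ => ?_
  rw [hl r, hr r]

/-- A function of four indices that is invariant under the three adjacent transpositions is
invariant under every permutation, because these transpositions generate the symmetric group. -/
theorem symm_of_adjacent {α β : Type*} (F : α → α → α → α → β)
    (h₁ : ∀ i j k l, F i j k l = F j i k l) (h₂ : ∀ i j k l, F i j k l = F i k j l)
    (h₃ : ∀ i j k l, F i j k l = F i j l k) (v : Fin 4 → α) (σ : Equiv.Perm (Fin 4)) :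
    F (v (σ 0)) (v (σ 1)) (v (σ 2)) (v (σ 3)) = F (v 0) (v 1) (v 2) (v 3) := by
  have hσ : σ ∈ Submonoid.closure
      (Set.range fun i : Fin 3 => Equiv.swap i.castSucc i.succ) := by
    rw [Equiv.Perm.mclosure_swap_castSucc_succ]
    trivial
  induction hσ using Submonoid.closure_induction generalizing v with
  | mem τ hτ =>
    obtain ⟨i, rfl⟩ := hτ
    fin_cases i
    · exact h₁ _ _ _ _
    · exact h₂ _ _ _ _
    · exact h₃ _ _ _ _
  | one => rfl
  | mul τ ρ _ _ hτ hρ => exact (hρ fun a => v (τ a)).trans (hτ v)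

theorem covGam_formula_and_symmetry {n : ℕ} (hn : 1 ≤ n) (φ : (Fin n → ℝ) → ℝ)
    (hφ : ContDiff ℝ (⊤ : ℕ∞) φ) (Ω : Set (Fin n → ℝ)) (hΩ : IsOpen Ω)
    (hconn : IsConnected Ω) (hpos : ∀ x ∈ Ω, (gmet φ x).PosDef) :
    ∀ x ∈ Ω,
      (∀ i j k l, covGam φ i j k l x
          = (1 / 2) * pd i (pd j (pd k (pd l φ))) x -
            ∑ r, ∑ s, gi φ x r s *
              (gam φ r i j x * gam φ s k l x + gam φ r i k x * gam φ s j l x +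
                gam φ r i l x * gam φ s j k x)) ∧
      (∀ (v : Fin 4 → Fin n) (σ : Equiv.Perm (Fin 4)),
        covGam φ (v (σ 0)) (v (σ 1)) (v (σ 2)) (v (σ 3)) x
          = covGam φ (v 0) (v 1) (v 2) (v 3) x) := by
  intro x _
  refine ⟨fun i j k l => ?_, fun v σ => ?_⟩
  · rw [covGam_eq_gamPair hφ]
    simp only [gamPair, ← Finset.sum_add_distrib, ← mul_add]
  · refine symm_of_adjacent (fun i j k l => covGam φ i j k l x) ?_ ?_ ?_ v σ
    · intro i j k l
      simp only [covGam_eq_gamPair hφ]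
      rw [pd_comm (pd_contDiff (pd_contDiff hφ l) k) i j, gamPair_swap_fst hφ x i j k l,
        gamPair_swap_pairs hφ x i k j l, gamPair_swap_pairs hφ x i l j k]
      ring
    · intro i j k l
      simp only [covGam_eq_gamPair hφ]
      rw [pd_comm (pd_contDiff hφ l) j k, gamPair_swap_snd hφ x i l j k]
      ring
    · intro i j k l
      simp only [covGam_eq_gamPair hφ]
      rw [pd_comm hφ k l, gamPair_swap_snd hφ x i j k l]
      ring

end
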